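/- arXiv:math/0403510 — 3 statements merged into one kernel-verified Lean document; each statement's English description precedes it below -/
import Mathlib

section
/- The real Gamma function satisfies Γ(59/60) = (π · φ · √(√3 + 1) · √(√5 + √3) · √(√15 + ψ) · √(√10 + √φ) / (2^(5/4) · 5^(3/4))) · Γ(1/60)⁻¹, where φ = 5 + √5 and ψ = √(5 + 2√5). -/
open Real

/-!
By Euler's reflection formula, `Γ(59/60) Γ(1/60) = π / sin 3°`, so everything rests on the exact
value of `sin 3°`. The nested radicals are trigonometric at multiples of `36°`:
`√(5 + √5) = 2√2 sin 72°`, `√(5 + 2√5) = tan 72°` and `√5 = 4 sin 36° sin 72° = tan 36° tan 72°`.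
Hence `√10 + √(5 + √5) = 8√2 sin 72° sin 33° cos 3°` and
`√15 + √(5 + 2√5) = 2 tan 72° cos 24° / cos 36°`. Multiplied by `sin² 3°`, the product of these two
sums collapses to an element of `ℚ(√2, √3, √5)`, through `2 sin 3° cos 3° = sin 6°` and the
product-to-sum formulas for `sin 6° cos 24°` and `sin 3° sin 33°`.
-/

theorem sqrt_five_sq : √5 ^ 2 = 5 :=
  sq_sqrt (by norm_num)

theorem sqrt_ten : √10 = √2 * √5 := by
  rw [← sqrt_mul zero_le_two]
  norm_num

theorem cos_two_pi_div_five : cos (2 * π / 5) = (√5 - 1) / 4 := by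
  rw [mul_div_assoc, cos_two_mul, cos_pi_div_five]
  linear_combination sqrt_five_sq / 8

theorem sin_sq_two_pi_div_five : sin (2 * π / 5) ^ 2 = (5 + √5) / 8 := by
  rw [sin_sq, cos_two_pi_div_five]
  linear_combination -sqrt_five_sq / 16

theorem cos_pi_div_five_mul_cos_two_pi_div_five : cos (π / 5) * cos (2 * π / 5) = 1 / 4 := by
  rw [cos_pi_div_five, cos_two_pi_div_five]
  linear_combination sqrt_five_sq / 16

theorem sin_pi_div_five_mul_sin_two_pi_div_five : sin (π / 5) * sin (2 * π / 5) = √5 / 4 := by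
  calc sin (π / 5) * sin (2 * π / 5)
      = 2 * (1 - cos (π / 5) ^ 2) * cos (π / 5) := by
        rw [mul_div_assoc, sin_two_mul, ← sin_sq]
        ring
    _ = √5 / 4 := by
        rw [cos_pi_div_five]
        linear_combination -(√5 + 3) / 32 * sqrt_five_sq

theorem tan_pi_div_five_mul_tan_two_pi_div_five : tan (π / 5) * tan (2 * π / 5) = √5 := by
  rw [tan_eq_sin_div_cos, tan_eq_sin_div_cos, div_mul_div_comm,
    sin_pi_div_five_mul_sin_two_pi_div_five, cos_pi_div_five_mul_cos_two_pi_div_five]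
  ring

theorem sqrt_five_add_sqrt_five : √(5 + √5) = 2 * √2 * sin (2 * π / 5) := by
  have hsin : 0 < sin (2 * π / 5) :=
    sin_pos_of_pos_of_lt_pi (by positivity) (by linarith [pi_pos])
  rw [sqrt_eq_iff_eq_sq (by positivity) (by positivity), mul_pow, mul_pow, sq_sqrt (by norm_num),
    sin_sq_two_pi_div_five]
  ring

theorem tan_two_pi_div_five : tan (2 * π / 5) = √(5 + 2 * √5) := by
  have hcos : 0 < cos (2 * π / 5) :=
    cos_pos_of_mem_Ioo ⟨by linarith [pi_pos], by linarith [pi_pos]⟩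
  have htan : 0 < tan (2 * π / 5) :=
    tan_pos_of_pos_of_lt_pi_div_two (by positivity) (by linarith [pi_pos])
  rw [eq_comm, sqrt_eq_iff_eq_sq (by positivity) htan.le, tan_eq_sin_div_cos, div_pow,
    eq_div_iff (by positivity), sin_sq_two_pi_div_five, cos_two_pi_div_five]
  linear_combination (√5 / 8 + 1 / 16) * sqrt_five_sq

theorem cos_add_sqrt_three_mul_sin (x : ℝ) : cos x + √3 * sin x = 2 * cos (π / 3 - x) := by
  rw [cos_sub, cos_pi_div_three, sin_pi_div_three]
  ring

theorem cos_pi_div_five_mul_sqrt_fifteen_add_sqrt :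
    cos (π / 5) * (√15 + √(5 + 2 * √5)) = 2 * tan (2 * π / 5) * cos (2 * π / 15) := by
  have h15 : √15 = √3 * √5 := by
    rw [← sqrt_mul zero_le_three]
    norm_num
  have hcos : cos (π / 5) ≠ 0 := by
    rw [cos_pi_div_five]
    positivity
  calc cos (π / 5) * (√15 + √(5 + 2 * √5))
      = tan (2 * π / 5) * (cos (π / 5) + √3 * (tan (π / 5) * cos (π / 5))) := by
        rw [h15, ← tan_two_pi_div_five, ← tan_pi_div_five_mul_tan_two_pi_div_five]
        ring
    _ = tan (2 * π / 5) * (2 * cos (π / 3 - π / 5)) := by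
        rw [tan_mul_cos hcos, cos_add_sqrt_three_mul_sin]
    _ = 2 * tan (2 * π / 5) * cos (2 * π / 15) := by ring_nf

theorem sqrt_ten_add_sqrt_five_add_sqrt_five :
    √10 + √(5 + √5) = 8 * √2 * sin (2 * π / 5) * sin (11 * π / 60) * cos (π / 60) := by
  have hsum : 2 * sin (11 * π / 60) * cos (π / 60) = 1 / 2 + sin (π / 5) := by
    rw [two_mul_sin_mul_cos, ← sin_pi_div_six]
    ring_nf
  calc √10 + √(5 + √5)
      = √2 * (4 * (sin (π / 5) * sin (2 * π / 5))) + 2 * √2 * sin (2 * π / 5) := by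
        rw [sqrt_five_add_sqrt_five, sqrt_ten, sin_pi_div_five_mul_sin_two_pi_div_five]
        ring
    _ = 4 * √2 * sin (2 * π / 5) * (1 / 2 + sin (π / 5)) := by ring
    _ = 8 * √2 * sin (2 * π / 5) * sin (11 * π / 60) * cos (π / 60) := by
        rw [← hsum]
        ring

theorem sin_pi_div_thirty_mul_cos_two_pi_div_fifteen :
    sin (π / 30) * cos (2 * π / 15) = (3 - √5) / 8 := by
  have hsum : 2 * sin (π / 30) * cos (2 * π / 15) = sin (π / 6) - cos (2 * π / 5) := by
    rw [two_mul_sin_mul_cos, show π / 30 - 2 * π / 15 = -(π / 2 - 2 * π / 5) by ring, sin_neg,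
      sin_pi_div_two_sub]
    ring_nf
  rw [sin_pi_div_six, cos_two_pi_div_five] at hsum
  linear_combination hsum / 2

theorem sin_pi_div_sixty_mul_sin_eleven_pi_div_sixty :
    sin (π / 60) * sin (11 * π / 60) = (2 * √3 - 1 - √5) / 8 := by
  have hsum : 2 * sin (11 * π / 60) * sin (π / 60) = cos (π / 6) - cos (π / 5) := by
    rw [two_mul_sin_mul_sin]
    ring_nf
  rw [cos_pi_div_six, cos_pi_div_five] at hsum
  linear_combination hsum / 2

theorem sin_sq_pi_div_sixty_mul_add_mul_add :
    sin (π / 60) ^ 2 * ((√15 + √(5 + 2 * √5)) * (√10 + √(5 + √5))) =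
      √2 * (5 - √5) * (2 * √3 - 1 - √5) / 8 := by
  have hdouble : sin (π / 30) = 2 * sin (π / 60) * cos (π / 60) := by
    rw [← sin_two_mul]
    ring_nf
  have hcos : cos (π / 5) * cos (2 * π / 5) ≠ 0 := by
    rw [cos_pi_div_five_mul_cos_two_pi_div_five]
    norm_num
  apply mul_left_cancel₀ hcos
  calc cos (π / 5) * cos (2 * π / 5) *
        (sin (π / 60) ^ 2 * ((√15 + √(5 + 2 * √5)) * (√10 + √(5 + √5))))
      = cos (2 * π / 5) * sin (π / 60) ^ 2 * (cos (π / 5) * (√15 + √(5 + 2 * √5))) *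
          (√10 + √(5 + √5)) := by ring
    _ = 8 * √2 * sin (2 * π / 5) * (tan (2 * π / 5) * cos (2 * π / 5)) *
          (sin (π / 30) * cos (2 * π / 15)) * (sin (π / 60) * sin (11 * π / 60)) := by
        rw [cos_pi_div_five_mul_sqrt_fifteen_add_sqrt, sqrt_ten_add_sqrt_five_add_sqrt_five,
          hdouble]
        ring
    _ = 8 * √2 * sin (2 * π / 5) ^ 2 *
          (sin (π / 30) * cos (2 * π / 15)) * (sin (π / 60) * sin (11 * π / 60)) := by
        rw [tan_mul_cos (right_ne_zero_of_mul hcos)]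
        ring
    _ = cos (π / 5) * cos (2 * π / 5) * (√2 * (5 - √5) * (2 * √3 - 1 - √5) / 8) := by
        rw [sin_sq_two_pi_div_five, sin_pi_div_thirty_mul_cos_two_pi_div_fifteen,
          sin_pi_div_sixty_mul_sin_eleven_pi_div_sixty, cos_pi_div_five_mul_cos_two_pi_div_five]
        linear_combination -√2 * (2 * √3 - 1 - √5) / 64 * sqrt_five_sq

theorem sqrt_three_add_one_mul_add_mul_sub :
    (√3 + 1) * (√5 + √3) * (2 * √3 - 1 - √5) = 2 * (√5 - 1) := by
  have h3 : √3 ^ 2 = 3 := sq_sqrt zero_le_three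
  linear_combination (2 * √3 + √5 + 1) * h3 - (√3 + 1) * sqrt_five_sq

theorem radicals_mul_sin_sq_pi_div_sixty :
    (5 + √5) ^ 2 * (√3 + 1) * (√5 + √3) * (√15 + √(5 + 2 * √5)) * (√10 + √(5 + √5)) *
      sin (π / 60) ^ 2 = 20 * √10 := by
  calc (5 + √5) ^ 2 * (√3 + 1) * (√5 + √3) * (√15 + √(5 + 2 * √5)) * (√10 + √(5 + √5)) *
        sin (π / 60) ^ 2
      = (5 + √5) ^ 2 * (√3 + 1) * (√5 + √3) *
          (sin (π / 60) ^ 2 * ((√15 + √(5 + 2 * √5)) * (√10 + √(5 + √5)))) := by ring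
    _ = √2 / 8 * (5 + √5) ^ 2 * (5 - √5) *
          ((√3 + 1) * (√5 + √3) * (2 * √3 - 1 - √5)) := by
        rw [sin_sq_pi_div_sixty_mul_add_mul_add]
        ring
    _ = √2 / 4 * (25 - √5 ^ 2) * (4 * √5 + √5 ^ 2 - 5) := by
        rw [sqrt_three_add_one_mul_add_mul_sub]
        ring
    _ = 20 * √10 := by
        rw [sqrt_five_sq, sqrt_ten]
        ring

theorem rpow_div_four_sq {x : ℝ} (hx : 0 ≤ x) (r : ℝ) : (x ^ (r / 4)) ^ 2 = √x ^ r := by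
  rw [← rpow_mul_natCast hx, ← rpow_div_two_eq_sqrt r hx]
  ring_nf

theorem two_rpow_mul_five_rpow_sq :
    ((2 : ℝ) ^ ((5 : ℝ) / 4) * (5 : ℝ) ^ ((3 : ℝ) / 4)) ^ 2 = 20 * √10 := by
  have h2 : √2 ^ 2 = 2 := sq_sqrt zero_le_two
  rw [mul_pow, rpow_div_four_sq zero_le_two, rpow_div_four_sq (by norm_num), rpow_ofNat, rpow_ofNat]
  calc √2 ^ 5 * √5 ^ 3 = (√2 ^ 2) ^ 2 * √5 ^ 2 * (√2 * √5) := by ring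
    _ = 20 * √10 := by
        rw [h2, sqrt_five_sq, sqrt_ten]
        norm_num

theorem inv_sin_pi_div_sixty :
    (sin (π / 60))⁻¹ =
      (5 + √5) * √(√3 + 1) * √(√5 + √3) * √(√15 + √(5 + 2 * √5)) * √(√10 + √(5 + √5)) /
        ((2 : ℝ) ^ ((5 : ℝ) / 4) * (5 : ℝ) ^ ((3 : ℝ) / 4)) := by
  have hsin : 0 < sin (π / 60) := sin_pos_of_pos_of_lt_pi (by positivity) (by linarith [pi_pos])
  rw [inv_eq_one_div, div_eq_div_iff hsin.ne' (by positivity), one_mul,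
    ← sq_eq_sq₀ (by positivity) (by positivity), two_rpow_mul_five_rpow_sq]
  simp only [mul_pow]
  repeat rw [sq_sqrt (by positivity)]
  exact radicals_mul_sin_sq_pi_div_sixty.symm

theorem Gamma_one_sub {s : ℝ} (hs : Gamma s ≠ 0) :
    Gamma (1 - s) = π / sin (π * s) * (Gamma s)⁻¹ := by
  rw [eq_mul_inv_iff_mul_eq₀ hs, mul_comm, Gamma_mul_Gamma_one_sub]

theorem gamma_fiftynine_sixtieths :
    Real.Gamma (59/60) =
      (π * (5 + Real.sqrt 5) * Real.sqrt (Real.sqrt 3 + 1) *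
          Real.sqrt (Real.sqrt 5 + Real.sqrt 3) *
          Real.sqrt (Real.sqrt 15 + Real.sqrt (5 + 2 * Real.sqrt 5)) *
          Real.sqrt (Real.sqrt 10 + Real.sqrt (5 + Real.sqrt 5)) /
          ((2:ℝ) ^ ((5:ℝ)/4) * (5:ℝ) ^ ((3:ℝ)/4))) *
        (Real.Gamma (1/60))⁻¹ := by
  have hΓ : Real.Gamma (1 / 60) ≠ 0 := (Gamma_pos_of_pos (by norm_num)).ne'
  rw [show (59 / 60 : ℝ) = 1 - 1 / 60 by norm_num, Gamma_one_sub hΓ, mul_one_div,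
    div_eq_mul_inv π, inv_sin_pi_div_sixty]
  ring
end

section
/- Let H₁ = ∫₀¹ dz/√(1 − z⁵) and H₂ = ∫₀¹ z·dz/√(1 − z⁵). Then the real Gamma function satisfies Γ(1/5) = π^(1/5) · 2^(19/50) · √5 · φ^(1/10) · H₁^(2/5) · H₂^(1/5) and Γ(2/5) = π^(2/5) · 2^(4/25) · φ^(1/5) · H₁^(−1/5) · H₂^(2/5), where φ = 5 + √5. -/
open Real

/-!
The substitution `x = z ^ 5` turns the two integrals into the beta values `B(1/5, 1/2) / 5` and
`B(2/5, 1/2) / 5`. By Legendre's duplication formula `B(a, 1/2) = 2 ^ (2 * a - 1) * B(a, a)`, so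
`H₁` is a multiple of `Γ(1/5) ^ 2 / Γ(2/5)` and `H₂` one of `Γ(2/5) ^ 2 / Γ(4/5)`. The reflection
formula replaces `Γ(4/5)` by `π / (Γ(1/5) * sin (π / 5))`, leaving two monomial equations in
`Γ(1/5)` and `Γ(2/5)`, from which the fifth power of each can be read off.
-/

open ProbabilityTheory (beta beta_pos beta_eq_betaIntegralReal)

theorem integral_rpow_mul_one_sub_rpow {a b : ℝ} (ha : 0 < a) (hb : 0 < b) :
    ∫ x in (0 : ℝ)..1, x ^ (a - 1) * (1 - x) ^ (b - 1) = beta a b := by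
  have complex_integral : Complex.betaIntegral a b =
      ((∫ x in (0 : ℝ)..1, x ^ (a - 1) * (1 - x) ^ (b - 1) : ℝ) : ℂ) := by
    rw [Complex.betaIntegral, ← intervalIntegral.integral_ofReal]
    refine intervalIntegral.integral_congr fun x hx ↦ ?_
    rw [Set.uIcc_of_le zero_le_one] at hx
    push_cast [Complex.ofReal_cpow hx.1, Complex.ofReal_cpow (sub_nonneg.2 hx.2)]
    rfl
  rw [beta_eq_betaIntegralReal a b ha hb, complex_integral, Complex.ofReal_re]

theorem integral_rpow_mul_one_sub_rpow_rpow {a b p : ℝ} (ha : 0 < a) (hb : 0 < b) (hp : 0 < p) :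
    ∫ z in (0 : ℝ)..1, z ^ (a - 1) * (1 - z ^ p) ^ (b - 1) = beta (a / p) b / p := by
  have substitution := intervalIntegral.integral_comp_mul_deriv_of_deriv_nonneg
    (a := 0) (b := 1) (f := fun z : ℝ ↦ z ^ p) (f' := fun z ↦ p * z ^ (p - 1))
    (g := fun x ↦ x ^ (a / p - 1) * (1 - x) ^ (b - 1))
    (continuous_rpow_const hp.le).continuousOn
    (fun z hz ↦ hasDerivAt_rpow_const (.inl (by simpa using hz.1.ne')))
    (fun z hz ↦ by
      have : 0 < z := by simpa using hz.1
      positivity)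
  rw [zero_rpow hp.ne', one_rpow, integral_rpow_mul_one_sub_rpow (div_pos ha hp) hb]
    at substitution
  rw [eq_div_iff hp.ne', ← substitution, ← intervalIntegral.integral_mul_const]
  refine intervalIntegral.integral_congr_uIoo fun z hz ↦ ?_
  have hz₀ : 0 < z := by simpa using hz.1
  have monomial : (z ^ p) ^ (a / p - 1) * z ^ (p - 1) = z ^ (a - 1) := by
    rw [← rpow_mul hz₀.le, ← rpow_add hz₀]
    congr 1
    field_simp
    ring
  simp only [Function.comp_apply, ← monomial]
  ring

theorem beta_one_half {a : ℝ} (ha : 0 < a) :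
    beta a (1 / 2) = 2 ^ (2 * a - 1) * beta a a := by
  have duplication := Gamma_mul_Gamma_add_half a
  have := Gamma_pos_of_pos (add_pos ha one_half_pos)
  have := Gamma_pos_of_pos (mul_pos two_pos ha)
  rw [beta, beta, Gamma_one_half_eq, ← two_mul, ← neg_sub 1 (2 * a), rpow_neg two_pos.le,
    inv_mul_eq_div, div_div, div_eq_div_iff (by positivity) (by positivity)]
  linear_combination -Gamma a * duplication

/-- The integral `∫₀¹ z ^ k / √(1 - z ^ n) dz` of the differential `z ^ k dz / w` along the real arc
from `z = 0` to `z = 1` of the hyperelliptic curve `w ^ 2 = 1 - z ^ n`. For `n = 5`, the values at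
`k = 0` and `k = 1` are `H₁` and `H₂`. -/
noncomputable def hyperellipticIntegral (n k : ℕ) : ℝ :=
  ∫ z in (0 : ℝ)..1, z ^ k / √(1 - z ^ n)

section hyperellipticIntegral

variable {n : ℕ} (hn : n ≠ 0) (k : ℕ)
include hn

theorem hyperellipticIntegral_eq_beta :
    hyperellipticIntegral n k = beta ((k + 1) / n) (1 / 2) / n := by
  rw [← integral_rpow_mul_one_sub_rpow_rpow (by positivity) one_half_pos (by positivity)]
  refine intervalIntegral.integral_congr fun z hz ↦ ?_
  rw [Set.uIcc_of_le zero_le_one] at hz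
  have one_sub_nonneg : 0 ≤ 1 - z ^ n := sub_nonneg.2 (pow_le_one₀ hz.1 hz.2)
  simp only [add_sub_cancel_right, rpow_natCast]
  rw [show (1 / 2 - 1 : ℝ) = -(1 / 2) by norm_num, rpow_neg one_sub_nonneg, ← sqrt_eq_rpow,
    div_eq_mul_inv]

theorem hyperellipticIntegral_pos : 0 < hyperellipticIntegral n k := by
  rw [hyperellipticIntegral_eq_beta hn]
  exact div_pos (beta_pos (by positivity) one_half_pos) (by positivity)

theorem Gamma_sq_eq_hyperellipticIntegral :
    Gamma ((k + 1) / n) ^ 2 =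
      n * 2 ^ (1 - 2 * ((k + 1) / n : ℝ)) * hyperellipticIntegral n k *
        Gamma (2 * ((k + 1) / n)) := by
  have arg_pos : (0 : ℝ) < (k + 1) / n := by positivity
  have := Gamma_pos_of_pos (mul_pos two_pos arg_pos)
  rw [hyperellipticIntegral_eq_beta hn, beta_one_half arg_pos, beta, ← two_mul,
    ← neg_sub (2 * ((k + 1) / n : ℝ)) 1, rpow_neg two_pos.le]
  field_simp

end hyperellipticIntegral

theorem sin_pi_div_five : sin (π / 5) = √5 / (√2 * √(5 + √5)) := by
  have sin_pos : 0 < sin (π / 5) := sin_pos_of_pos_of_lt_pi (by positivity) (by linarith [pi_pos])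
  rw [← sqrt_mul two_pos.le, ← sqrt_div' _ (by positivity), eq_comm,
    sqrt_eq_iff_eq_sq (by positivity) sin_pos.le, sin_sq, cos_pi_div_five]
  have sq_sqrt_five : √5 ^ 2 = 5 := sq_sqrt (by norm_num)
  field_simp
  linear_combination 2 * (√5 + 7) * sq_sqrt_five

theorem Gamma_one_fifth_mul_Gamma_four_fifths :
    Gamma (1 / 5) * Gamma (4 / 5) = π * (√2 * √(5 + √5)) / √5 := by
  have reflection := Gamma_mul_Gamma_one_sub (1 / 5)
  rw [show (1 - 1 / 5 : ℝ) = 4 / 5 by norm_num, mul_one_div, sin_pi_div_five] at reflection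
  rw [reflection, div_div_eq_mul_div]

theorem Gamma_one_fifth_sq :
    Gamma (1 / 5) ^ 2 =
      5 * 2 ^ (3 / 5 : ℝ) * hyperellipticIntegral 5 0 * Gamma (2 / 5) := by
  convert Gamma_sq_eq_hyperellipticIntegral (n := 5) (by norm_num) 0 using 3 <;> norm_num

theorem Gamma_two_fifths_sq :
    Gamma (2 / 5) ^ 2 =
      5 * 2 ^ (1 / 5 : ℝ) * hyperellipticIntegral 5 1 * Gamma (4 / 5) := by
  convert Gamma_sq_eq_hyperellipticIntegral (n := 5) (by norm_num) 1 using 3 <;> norm_num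

theorem Gamma_one_fifth_mul_Gamma_two_fifths_sq :
    Gamma (1 / 5) * Gamma (2 / 5) ^ 2 =
      √5 * 2 ^ (7 / 10 : ℝ) * π * √(5 + √5) * hyperellipticIntegral 5 1 := by
  have two_rpow : (2 : ℝ) ^ (7 / 10 : ℝ) = 2 ^ (1 / 5 : ℝ) * √2 := by
    rw [sqrt_eq_rpow, ← rpow_add two_pos]
    norm_num
  rw [Gamma_two_fifths_sq, mul_left_comm, Gamma_one_fifth_mul_Gamma_four_fifths, two_rpow]
  field_simp
  rw [sq_sqrt (by norm_num), mul_comm]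

theorem Gamma_one_fifth_pow_five :
    Gamma (1 / 5) ^ 5 =
      π * 2 ^ (19 / 10 : ℝ) * √5 ^ 5 * √(5 + √5) * hyperellipticIntegral 5 0 ^ 2 *
        hyperellipticIntegral 5 1 := by
  have two_rpow : (2 : ℝ) ^ (19 / 10 : ℝ) = (2 ^ (3 / 5 : ℝ)) ^ 2 * 2 ^ (7 / 10 : ℝ) := by
    rw [← rpow_mul_natCast two_pos.le, ← rpow_add two_pos]
    norm_num
  have sqrt_five_pow_four : √5 ^ 4 = 5 ^ 2 := by
    rw [pow_mul _ 2 2, sq_sqrt (by norm_num)]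
  calc Gamma (1 / 5) ^ 5
    _ = Gamma (1 / 5) * (Gamma (1 / 5) ^ 2) ^ 2 := by ring
    _ = (5 * 2 ^ (3 / 5 : ℝ) * hyperellipticIntegral 5 0) ^ 2 *
          (Gamma (1 / 5) * Gamma (2 / 5) ^ 2) := by rw [Gamma_one_fifth_sq]; ring
    _ = _ := by
      rw [Gamma_one_fifth_mul_Gamma_two_fifths_sq, two_rpow, pow_succ √5 4, sqrt_five_pow_four]
      ring

theorem Gamma_two_fifths_pow_five :
    Gamma (2 / 5) ^ 5 =
      π ^ 2 * 2 ^ (4 / 5 : ℝ) * (5 + √5) * (hyperellipticIntegral 5 0)⁻¹ *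
        hyperellipticIntegral 5 1 ^ 2 := by
  have two_rpow : ((2 : ℝ) ^ (7 / 10 : ℝ)) ^ 2 = 2 ^ (3 / 5 : ℝ) * 2 ^ (4 / 5 : ℝ) := by
    rw [← rpow_mul_natCast two_pos.le, ← rpow_add two_pos]
    norm_num
  have integral_pos : 0 < hyperellipticIntegral 5 0 := hyperellipticIntegral_pos (by norm_num) 0
  have cross_mul :=
    calc 5 * 2 ^ (3 / 5 : ℝ) * hyperellipticIntegral 5 0 * Gamma (2 / 5) ^ 5
      _ = (Gamma (1 / 5) * Gamma (2 / 5) ^ 2) ^ 2 := by rw [mul_pow, Gamma_one_fifth_sq]; ring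
      _ = 5 * (2 ^ (3 / 5 : ℝ) * 2 ^ (4 / 5 : ℝ)) * π ^ 2 * (5 + √5) *
            hyperellipticIntegral 5 1 ^ 2 := by
        rw [Gamma_one_fifth_mul_Gamma_two_fifths_sq, ← two_rpow]
        simp only [mul_pow]
        rw [sq_sqrt (by norm_num), sq_sqrt (by positivity)]
  field_simp
  refine mul_left_cancel₀ (by positivity : 5 * (2 : ℝ) ^ (3 / 5 : ℝ) ≠ 0) ?_
  linear_combination cross_mul

theorem gamma_fifths_hyperelliptic (H₁ H₂ : ℝ)
    (h₁ : H₁ = ∫ z in (0:ℝ)..1, 1 / Real.sqrt (1 - z ^ 5))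
    (h₂ : H₂ = ∫ z in (0:ℝ)..1, z / Real.sqrt (1 - z ^ 5)) :
    Real.Gamma (1/5) =
        π ^ ((1:ℝ)/5) * (2:ℝ) ^ ((19:ℝ)/50) * Real.sqrt 5 *
          (5 + Real.sqrt 5) ^ ((1:ℝ)/10) * H₁ ^ ((2:ℝ)/5) * H₂ ^ ((1:ℝ)/5) ∧
      Real.Gamma (2/5) =
        π ^ ((2:ℝ)/5) * (2:ℝ) ^ ((4:ℝ)/25) * (5 + Real.sqrt 5) ^ ((1:ℝ)/5) *
          H₁ ^ (-(1:ℝ)/5) * H₂ ^ ((2:ℝ)/5) := by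
  have H₁_eq : H₁ = hyperellipticIntegral 5 0 := by simp [h₁, hyperellipticIntegral]
  have H₂_eq : H₂ = hyperellipticIntegral 5 1 := by simp [h₂, hyperellipticIntegral]
  have H₁_pos : 0 < H₁ := H₁_eq ▸ hyperellipticIntegral_pos (by norm_num) 0
  have H₂_pos : 0 < H₂ := H₂_eq ▸ hyperellipticIntegral_pos (by norm_num) 1
  have φ_pos : 0 < 5 + √5 := by positivity
  have five_ne_zero : 5 ≠ 0 := by norm_num
  constructor
  · rw [← pow_left_inj₀ (Gamma_nonneg_of_nonneg (by norm_num)) (by positivity) five_ne_zero,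
      Gamma_one_fifth_pow_five, ← H₁_eq, ← H₂_eq]
    simp only [mul_pow, ← rpow_mul_natCast, pi_nonneg, zero_le_two, φ_pos.le, H₁_pos.le, H₂_pos.le]
    norm_num [sqrt_eq_rpow (5 + √5)]
  · rw [← pow_left_inj₀ (Gamma_nonneg_of_nonneg (by norm_num)) (by positivity) five_ne_zero,
      Gamma_two_fifths_pow_five, ← H₁_eq, ← H₂_eq]
    simp only [mul_pow, ← rpow_mul_natCast, pi_nonneg, zero_le_two, φ_pos.le, H₁_pos.le, H₂_pos.le]
    norm_num [rpow_neg_one]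
end

section
/- The real Gamma function satisfies Γ(1/2)·Γ(2/3) / (Γ(3/4)·Γ(5/12)) = √(√3 + 1) / (2^(1/4) · 3^(3/8)). -/
open Real

/-!
The function `s ↦ n ^ (s - 1) * ∏ k < n, Γ((s + k) / n)` is log-convex and satisfies the functional
equation of `Γ`, so by the Bohr–Mollerup theorem it is a constant multiple of `Γ`. For `n = 3` and
`s = 1 / 4` this relates `Γ(1/12) Γ(5/12) Γ(3/4)` to `Γ(1/4)`; Legendre duplication at `1/12` and
at `1/6` relates `Γ(1/12) Γ(7/12) Γ(2/3)` to `Γ(1/3)`. Eliminating `Γ(1/12)` cancels `Γ(1/3)`, and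
reflecting `Γ(1/4)` and `Γ(7/12)` leaves an equation for the square of the quotient.
-/

lemma eq_mul_Gamma_of_log_convex {f : ℝ → ℝ} (hf_conv : ConvexOn ℝ (Set.Ioi 0) (log ∘ f))
    (hf_feq : ∀ {y : ℝ}, 0 < y → f (y + 1) = y * f y) (hf_pos : ∀ {y : ℝ}, 0 < y → 0 < f y)
    {x : ℝ} (hx : 0 < x) : f x = f 1 * Gamma x := by
  have log_feq {y : ℝ} (hy : 0 < y) : (log ∘ f) (y + 1) = (log ∘ f) y + log y := by
    simp only [Function.comp_apply]
    rw [hf_feq hy, log_mul hy.ne' (hf_pos hy).ne', add_comm]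
  have log_eq : log (f x) - log (f 1) = log (Gamma x) :=
    tendsto_nhds_unique (BohrMollerup.tendsto_logGammaSeq hf_conv log_feq hx)
      (BohrMollerup.tendsto_log_gamma hx)
  have hf_one : 0 < f 1 := hf_pos one_pos
  have hGamma : 0 < Gamma x := Gamma_pos_of_pos hx
  refine log_injOn_pos (hf_pos hx) (mul_pos hf_one hGamma) ?_
  rw [log_mul hf_one.ne' hGamma.ne']
  linarith

lemma convexOn_sum {ι 𝕜 E β : Type*} [Semiring 𝕜] [PartialOrder 𝕜] [AddCommMonoid E] [SMul 𝕜 E]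
    [AddCommMonoid β] [PartialOrder β] [IsOrderedAddMonoid β] [Module 𝕜 β] {S : Set E}
    (hS : Convex 𝕜 S) (t : Finset ι) {f : ι → E → β} (hf : ∀ i ∈ t, ConvexOn 𝕜 S (f i)) :
    ConvexOn 𝕜 S (∑ i ∈ t, f i) :=
  Finset.sum_induction f (ConvexOn 𝕜 S) (fun _ _ => ConvexOn.add)
    ⟨hS, fun _ _ _ _ _ _ _ _ _ => by simp⟩ hf

lemma convexOn_log_Gamma_comp_affine {a b : ℝ} (ha : 0 < a) (hb : 0 ≤ b) :
    ConvexOn ℝ (Set.Ioi 0) fun s => log (Gamma (a * s + b)) :=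
  (convexOn_log_Gamma.comp_affineMap (a • AffineMap.id ℝ ℝ + AffineMap.const ℝ ℝ b)).subset
    (fun s (hs : 0 < s) => show 0 < a * s + b by positivity) (convex_Ioi 0)

/-- The product of Gauss's multiplication formula, scaled by a power of `n` so that it satisfies
the functional equation of `Gamma`. -/
noncomputable def multiplicationGamma (n : ℕ) (s : ℝ) : ℝ :=
  n ^ (s - 1) * ∏ k ∈ Finset.range n, Gamma ((s + k) / n)

section MultiplicationFormula

variable {n : ℕ} {s : ℝ}

lemma multiplicationGamma_pos (hn : n ≠ 0) (hs : 0 < s) : 0 < multiplicationGamma n s :=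
  mul_pos (by positivity) (Finset.prod_pos fun _ _ => by positivity)

lemma multiplicationGamma_add_one (hn : n ≠ 0) (hs : s ≠ 0) :
    multiplicationGamma n (s + 1) = s * multiplicationGamma n s := by
  have hn' : (n : ℝ) ≠ 0 := by exact_mod_cast hn
  have rpow_shift : (n : ℝ) ^ (s + 1 - 1) = n ^ (s - 1) * n := by
    rw [← rpow_add_one hn', add_sub_right_comm]
  have prod_shift : ∏ k ∈ Finset.range n, Gamma ((s + 1 + k) / n) =
      s / n * ∏ k ∈ Finset.range n, Gamma ((s + k) / n) := by
    obtain ⟨m, rfl⟩ := Nat.exists_eq_succ_of_ne_zero hn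
    have last_factor : Gamma ((s + 1 + m) / (m + 1 : ℕ)) =
        s / (m + 1 : ℕ) * Gamma (s / (m + 1 : ℕ)) := by
      rw [← Gamma_add_one (div_ne_zero hs hn'), div_add_one hn', Nat.cast_succ, add_assoc,
        add_comm (1 : ℝ)]
    rw [Finset.prod_range_succ, Finset.prod_range_succ', last_factor]
    simp only [Nat.cast_succ, Nat.cast_zero, add_zero, add_assoc, add_comm (1 : ℝ)]
    ring
  rw [multiplicationGamma, multiplicationGamma, rpow_shift, prod_shift]
  field_simp

lemma convexOn_log_multiplicationGamma (hn : n ≠ 0) :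
    ConvexOn ℝ (Set.Ioi 0) (log ∘ multiplicationGamma n) := by
  have hn' : (0 : ℝ) < n := by positivity
  have convex_power : ConvexOn ℝ (Set.Ioi 0) fun s : ℝ => log n * (s - 1) :=
    ((convexOn_id (convex_Ioi 0)).add_const (-1)).smul (log_natCast_nonneg n)
  have convex_product := convexOn_sum (convex_Ioi (0 : ℝ)) (Finset.range n) fun k _ =>
    convexOn_log_Gamma_comp_affine (a := (n : ℝ)⁻¹) (b := k / n) (by positivity) (by positivity)
  refine (convex_power.add convex_product).congr fun s (hs : 0 < s) => ?_
  have hGamma (k : ℕ) : Gamma ((s + k) / n) ≠ 0 := by positivity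
  simp only [Function.comp_apply, multiplicationGamma, Pi.add_apply, Finset.sum_apply]
  rw [log_mul (rpow_pos_of_pos hn' _).ne' (Finset.prod_ne_zero_iff.mpr fun k _ => hGamma k),
    log_rpow hn', log_prod fun k _ => hGamma k]
  simp only [add_div, inv_mul_eq_div, mul_comm (log _)]

theorem prod_Gamma_add_div (hn : n ≠ 0) (hs : 0 < s) :
    ∏ k ∈ Finset.range n, Gamma ((s + k) / n) =
      n ^ (1 - s) * (∏ k ∈ Finset.range n, Gamma ((1 + k) / n)) * Gamma s := by
  have hn' : (0 : ℝ) < n := by positivity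
  have proportional : multiplicationGamma n s = multiplicationGamma n 1 * Gamma s :=
    eq_mul_Gamma_of_log_convex (convexOn_log_multiplicationGamma hn)
      (fun hy => multiplicationGamma_add_one hn hy.ne') (multiplicationGamma_pos hn) hs
  simp only [multiplicationGamma, sub_self, rpow_zero, one_mul] at proportional
  rw [mul_assoc, ← proportional, ← mul_assoc, ← rpow_add hn']
  simp

end MultiplicationFormula

theorem Gamma_mul_Gamma_add_third_mul_Gamma_add_two_thirds {s : ℝ} (hs : 0 < s) :
    Gamma s * Gamma (s + 1 / 3) * Gamma (s + 2 / 3) =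
      3 ^ (1 - 3 * s) * Gamma (1 / 3) * Gamma (2 / 3) * Gamma (3 * s) := by
  have prod_eq : ∏ k ∈ Finset.range 3, Gamma ((3 * s + k) / (3 : ℕ)) =
      Gamma s * Gamma (s + 1 / 3) * Gamma (s + 2 / 3) := by
    simp [Finset.prod_range_succ, add_div]
  have prod_one_eq : ∏ k ∈ Finset.range 3, Gamma ((1 + k) / (3 : ℕ)) =
      Gamma (1 / 3) * Gamma (2 / 3) := by
    norm_num [Finset.prod_range_succ]
  rw [← prod_eq, prod_Gamma_add_div three_ne_zero (by positivity), prod_one_eq, Nat.cast_ofNat,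
    ← mul_assoc]

theorem Gamma_mul_Gamma_add_half_mul_Gamma_two_mul_add_half {s : ℝ} (hs : 0 < s) :
    Gamma s * Gamma (s + 1 / 2) * Gamma (2 * s + 1 / 2) =
      2 ^ (2 - 6 * s) * π * Gamma (4 * s) := by
  have hGamma : Gamma (2 * s) ≠ 0 := by positivity
  refine mul_left_cancel₀ hGamma ?_
  calc Gamma (2 * s) * (Gamma s * Gamma (s + 1 / 2) * Gamma (2 * s + 1 / 2))
      = Gamma s * Gamma (s + 1 / 2) * (Gamma (2 * s) * Gamma (2 * s + 1 / 2)) := by ring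
    _ = Gamma (2 * s) * ((2 ^ (1 - 2 * s) * 2 ^ (1 - 2 * (2 * s))) * (√π * √π) *
          Gamma (2 * (2 * s))) := by
        rw [Gamma_mul_Gamma_add_half s, Gamma_mul_Gamma_add_half (2 * s)]
        ring
    _ = Gamma (2 * s) * (2 ^ (2 - 6 * s) * π * Gamma (4 * s)) := by
        rw [← rpow_add two_pos, mul_self_sqrt pi_pos.le]
        ring_nf

lemma sin_five_mul_pi_div_twelve : sin (5 * π / 12) = √2 * (√3 + 1) / 4 := by
  rw [show 5 * π / 12 = π / 4 + π / 6 by ring, sin_add, sin_pi_div_four, cos_pi_div_four,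
    sin_pi_div_six, cos_pi_div_six]
  ring

lemma Gamma_one_fourth_mul_Gamma_three_fourths : Gamma (1 / 4) * Gamma (3 / 4) = √2 * π := by
  calc Gamma (1 / 4) * Gamma (3 / 4) = Gamma (1 / 4) * Gamma (1 - 1 / 4) := by norm_num
    _ = π / (√2 / 2) := by rw [Gamma_mul_Gamma_one_sub, mul_one_div, sin_pi_div_four]
    _ = √2 * π := by
        field_simp
        norm_num

lemma Gamma_five_twelfths_mul_Gamma_seven_twelfths :
    Gamma (5 / 12) * Gamma (7 / 12) = √2 * (√3 - 1) * π := by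
  have h3 : √3 ^ 2 = (3 : ℝ) := sq_sqrt (by norm_num)
  have h2 : √2 ^ 2 = (2 : ℝ) := sq_sqrt (by norm_num)
  calc Gamma (5 / 12) * Gamma (7 / 12) = Gamma (5 / 12) * Gamma (1 - 5 / 12) := by norm_num
    _ = π / (√2 * (√3 + 1) / 4) := by
        rw [Gamma_mul_Gamma_one_sub, mul_div_left_comm, ← mul_div_assoc,
          sin_five_mul_pi_div_twelve]
    _ = √2 * (√3 - 1) * π := by
        rw [div_eq_iff (by positivity)]
        linear_combination (-(π / 4) * √2 ^ 2) * h3 - π / 2 * h2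

lemma Gamma_one_twelfth_mul_Gamma_five_twelfths_mul_Gamma_three_fourths :
    Gamma (1 / 12) * Gamma (5 / 12) * Gamma (3 / 4) =
      3 ^ (3 / 4 : ℝ) * Gamma (1 / 3) * Gamma (2 / 3) * Gamma (1 / 4) := by
  convert Gamma_mul_Gamma_add_third_mul_Gamma_add_two_thirds (s := 1 / 12) (by norm_num) using 3
    <;> norm_num

lemma Gamma_one_twelfth_mul_Gamma_seven_twelfths_mul_Gamma_two_thirds :
    Gamma (1 / 12) * Gamma (7 / 12) * Gamma (2 / 3) = 2 * √2 * π * Gamma (1 / 3) := by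
  have rpow_eq : (2 : ℝ) ^ (2 - 6 * (1 / 12) : ℝ) = 2 * √2 := by
    rw [sqrt_eq_rpow, ← rpow_one_add' two_pos.le (by norm_num)]
    norm_num
  rw [← rpow_eq]
  convert Gamma_mul_Gamma_add_half_mul_Gamma_two_mul_add_half (s := 1 / 12) (by norm_num) using 3
    <;> norm_num

lemma Gamma_five_twelfths_mul_Gamma_three_fourths_sq :
    2 * Gamma (5 / 12) * Gamma (3 / 4) ^ 2 =
      3 ^ (3 / 4 : ℝ) * Gamma (7 / 12) * Gamma (2 / 3) ^ 2 := by
  have hGamma : Gamma (1 / 3) ≠ 0 := by positivity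
  have hpi : √2 * π ≠ 0 := by positivity
  refine mul_left_cancel₀ (mul_ne_zero hpi hGamma) ?_
  linear_combination
    Gamma (7 / 12) * Gamma (2 / 3) * Gamma (3 / 4) *
        Gamma_one_twelfth_mul_Gamma_five_twelfths_mul_Gamma_three_fourths
      - Gamma (5 / 12) * Gamma (3 / 4) ^ 2 *
        Gamma_one_twelfth_mul_Gamma_seven_twelfths_mul_Gamma_two_thirds
      + 3 ^ (3 / 4 : ℝ) * Gamma (1 / 3) * Gamma (2 / 3) ^ 2 * Gamma (7 / 12) *
        Gamma_one_fourth_mul_Gamma_three_fourths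

lemma sq_Gamma_three_fourths_mul_Gamma_five_twelfths :
    (√3 + 1) * (Gamma (3 / 4) * Gamma (5 / 12)) ^ 2 =
      √2 * 3 ^ (3 / 4 : ℝ) * π * Gamma (2 / 3) ^ 2 := by
  have h3 : √3 ^ 2 = (3 : ℝ) := sq_sqrt (by norm_num)
  linear_combination
    (√3 + 1) / 2 * Gamma (5 / 12) * Gamma_five_twelfths_mul_Gamma_three_fourths_sq
      + (√3 + 1) / 2 * 3 ^ (3 / 4 : ℝ) * Gamma (2 / 3) ^ 2 *
        Gamma_five_twelfths_mul_Gamma_seven_twelfths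
      + √2 * 3 ^ (3 / 4 : ℝ) * π * Gamma (2 / 3) ^ 2 / 2 * h3

theorem hypergeometric_gamma_quotient :
    Real.Gamma (1/2) * Real.Gamma (2/3) / (Real.Gamma (3/4) * Real.Gamma (5/12)) =
      Real.sqrt (Real.sqrt 3 + 1) / ((2:ℝ) ^ ((1:ℝ)/4) * (3:ℝ) ^ ((3:ℝ)/8)) := by
  have two_power : ((2 : ℝ) ^ ((1 : ℝ) / 4)) ^ 2 = √2 := by
    rw [← rpow_mul_natCast two_pos.le, sqrt_eq_rpow]
    norm_num
  have three_power : ((3 : ℝ) ^ ((3 : ℝ) / 8)) ^ 2 = 3 ^ (3 / 4 : ℝ) := by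
    rw [← rpow_mul_natCast three_pos.le]
    norm_num
  rw [Gamma_one_half_eq, ← sq_eq_sq₀ (by positivity) (by positivity), div_pow, div_pow,
    div_eq_div_iff (by positivity) (by positivity), sq_sqrt (by positivity), mul_pow √π,
    sq_sqrt pi_pos.le, mul_pow (2 ^ _), two_power, three_power]
  linear_combination -sq_Gamma_three_fourths_mul_Gamma_five_twelfths
end
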